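/- arXiv:2205.11851 — 2 statements merged into one kernel-verified Lean document; each statement's English description precedes it below -/
import Mathlib

section
/- Let G be the Grundy function of one-pile maximum Nim with rule sequence f(x) = ⌈x/2⌉. Then for every odd t, we have G(t) = (t + 1)/2. -/
/-!
From a pile of `2m + 1` stones the reachable piles are those in the window `[m, 2m]`, and from
`2m + 2` those in `[m + 1, 2m + 1]`. The proof rests on the invariant, proved by induction on `m`,
that `G` maps the window `[m, 2m]` bijectively onto `{0, …, m}` (`window_bij`). It gives
`G (2m + 1) = m + 1` at once (`grundy_odd_of_window`). Moreover `[m + 1, 2m + 1]` is the old window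
with `m` replaced by `2m + 1`, so the only value of `{0, …, m + 1}` missing there is `G m`, whence
`G (2m + 2) = G m` (`grundy_even_of_window`). Thus passing to the window `[m + 1, 2m + 2]` moves
the value `G m` to the pile `2m + 2` and adds the new value `m + 1`.
-/

/-- The minimum excluded value of a set of naturals. -/
noncomputable def mex (S : Set ℕ) : ℕ := sInf {n : ℕ | n ∉ S}

theorem mex_eq {S : Set ℕ} {n : ℕ} (hn : n ∉ S) (h : ∀ k < n, k ∈ S) : mex S = n := by
  have hle : mex S ≤ n := Nat.sInf_le hn
  have hmem : mex S ∉ S := Nat.sInf_mem (s := {n : ℕ | n ∉ S}) ⟨n, hn⟩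
  by_contra hne
  exact hmem (h _ (by omega))

/-- `G` satisfies the Grundy recursion of the game in which between `1` and `⌈t/2⌉` stones may be
removed from a pile of `t`; the rounding up is written `(t + 1) / 2` with natural division. -/
def IsHalfGrundy (G : ℕ → ℕ) : Prop :=
  ∀ t : ℕ, G t = mex {g : ℕ | ∃ v : ℕ, 1 ≤ v ∧ v ≤ (t + 1) / 2 ∧ g = G (t - v)}

/-- The Grundy recursion in terms of the piles `s` reached, `⌊t/2⌋ ≤ s < t`, rather than the
numbers of stones removed. -/
theorem IsHalfGrundy.eq_of {G : ℕ → ℕ} (hG : IsHalfGrundy G) {t n : ℕ}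
    (hn : ∀ s, t / 2 ≤ s → s < t → G s ≠ n)
    (h : ∀ k < n, ∃ s, t / 2 ≤ s ∧ s < t ∧ G s = k) : G t = n := by
  rw [hG t]
  apply mex_eq
  · rintro ⟨v, h1, h2, h3⟩
    -- For `t = 0` the bound `v ≤ 1 / 2 = 0` excludes every move.
    exact hn (t - v) (by omega) (by omega) h3.symm
  · intro k hk
    obtain ⟨s, h1, h2, h3⟩ := h k hk
    refine ⟨t - s, by omega, by omega, ?_⟩
    rw [Nat.sub_sub_self h2.le, h3]

theorem grundy_odd_of_window {G : ℕ → ℕ} (hG : IsHalfGrundy G) {m : ℕ}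
    (hb : Set.BijOn G (Set.Icc m (2 * m)) (Set.Iic m)) : G (2 * m + 1) = m + 1 := by
  apply hG.eq_of
  · intro s h1 h2 h3
    have : G s ≤ m := hb.mapsTo ⟨by omega, by omega⟩
    omega
  · intro k hk
    obtain ⟨s, ⟨h1, h2⟩, h3⟩ := hb.surjOn (show k ∈ Set.Iic m from Nat.le_of_lt_succ hk)
    exact ⟨s, by omega, by omega, h3⟩

theorem grundy_even_of_window {G : ℕ → ℕ} (hG : IsHalfGrundy G) {m : ℕ}
    (hb : Set.BijOn G (Set.Icc m (2 * m)) (Set.Iic m)) : G (2 * m + 2) = G m := by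
  have hm : m ∈ Set.Icc m (2 * m) := ⟨le_rfl, by omega⟩
  have hGm : G m ≤ m := hb.mapsTo hm
  apply hG.eq_of
  · intro s h1 h2 h3
    obtain rfl | hs : s = 2 * m + 1 ∨ s ≤ 2 * m := by omega
    · rw [grundy_odd_of_window hG hb] at h3
      omega
    · have := hb.injOn ⟨by omega, hs⟩ hm h3
      omega
  · intro k hk
    obtain ⟨s, ⟨h1, h2⟩, h3⟩ := hb.surjOn (show k ∈ Set.Iic m from hk.le.trans hGm)
    have : s ≠ m := by
      rintro rfl
      omega
    exact ⟨s, by omega, by omega, h3⟩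

theorem window_bij {G : ℕ → ℕ} (hG : IsHalfGrundy G) (m : ℕ) :
    Set.BijOn G (Set.Icc m (2 * m)) (Set.Iic m) := by
  induction m with
  | zero =>
    have h0 : G 0 = 0 := hG.eq_of (by omega) (by omega)
    simp [Set.BijOn, Set.MapsTo, Set.SurjOn, h0]
  | succ m ih =>
    have ho := grundy_odd_of_window hG ih
    have he := grundy_even_of_window hG ih
    have hm : m ∈ Set.Icc m (2 * m) := ⟨le_rfl, by omega⟩
    -- The old window without `m` is mapped bijectively onto `{0, …, m}` without `G m`.
    have h1 := ih.sdiff_singleton hm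
    have h2 := (h1.insert (a := 2 * m + 2) (by simp [he])).insert (a := 2 * m + 1) (by
      have : G m ≤ m := ih.mapsTo hm
      simp [he, ho]
      omega)
    have hGm : G m ≤ m := ih.mapsTo hm
    convert h2 using 1
    · ext s
      simp only [Set.mem_Icc, Set.mem_insert_iff, Set.mem_sdiff, Set.mem_singleton_iff]
      omega
    · ext k
      simp only [Set.mem_Iic, Set.mem_insert_iff, Set.mem_sdiff, Set.mem_singleton_iff, he, ho]
      omega

/-- For one-pile maximum Nim with rule sequence `f(x) = ⌈x/2⌉`: if `t` is odd,
then `G t = (t + 1) / 2`. -/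
theorem halfNim_grundy_odd
    (G : ℕ → ℕ)
    (hG : ∀ t : ℕ, G t = mex {g : ℕ | ∃ v : ℕ, 1 ≤ v ∧ v ≤ (t + 1) / 2 ∧ g = G (t - v)})
    (t : ℕ) (ht : Odd t) :
    G t = (t + 1) / 2 := by
  obtain ⟨m, rfl⟩ := ht
  rw [grundy_odd_of_window hG (window_bij hG m)]
  omega
end

section
/- Let G(·,·) be the Grundy function of one-pile maximum Nim with rule sequence f(x) = ⌈x/2⌉ and a one-time pass. For every u ≥ 1, if G(u,0) = 2 then G(u,1) = 0. -/
theorem mex_eq_of {S : Set ℕ} {k : ℕ} (hk : k ∉ S) (hlt : ∀ n < k, n ∈ S) : mex S = k := by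
  unfold mex
  apply le_antisymm
  · exact Nat.sInf_le hk
  · by_contra! hc
    have hm : sInf {n : ℕ | n ∉ S} ∈ {n : ℕ | n ∉ S} := Nat.sInf_mem ⟨k, hk⟩
    exact hm (hlt _ hc)

theorem mex_notMem {S : Set ℕ} (hS : S.Finite) : mex S ∉ S := by
  have hm : sInf {n : ℕ | n ∉ S} ∈ {n : ℕ | n ∉ S} := Nat.sInf_mem hS.exists_notMem
  exact hm

theorem mem_of_lt_mex {S : Set ℕ} {n : ℕ} (hn : n < mex S) : n ∈ S := by
  by_contra hc
  exact Nat.notMem_of_lt_sInf hn hc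

/-- The values of `b` at the piles that can be reached from a pile of size `t` by removing
stones. -/
def optionValues (b : ℕ → ℕ) (t : ℕ) : Set ℕ :=
  {g : ℕ | ∃ v : ℕ, 1 ≤ v ∧ v ≤ (t + 1) / 2 ∧ g = b (t - v)}

theorem mem_optionValues {b : ℕ → ℕ} {t n : ℕ} :
    n ∈ optionValues b t ↔ ∃ w, w < t ∧ t ≤ 2 * w + 1 ∧ b w = n := by
  constructor
  · rintro ⟨v, h1, h2, rfl⟩
    exact ⟨t - v, by omega, by omega, rfl⟩
  · rintro ⟨w, h1, h2, rfl⟩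
    refine ⟨t - w, by omega, by omega, ?_⟩
    congr 1
    omega

theorem optionValues_finite (b : ℕ → ℕ) (t : ℕ) : (optionValues b t).Finite := by
  refine ((Set.finite_Iio t).image b).subset ?_
  intro n hn
  obtain ⟨w, h1, -, h3⟩ := mem_optionValues.1 hn
  exact ⟨w, h1, h3⟩

/-- A pile never has the value of one of its options. Of two distinct piles in `[s, 2s]` the smaller
is an option of the larger, so this makes `a` injective on `[s, 2s]`. -/
theorem ne_of_option {a : ℕ → ℕ} (ha : ∀ t, a t = mex (optionValues a t)) {w t : ℕ}
    (h1 : w < t) (h2 : t ≤ 2 * w + 1) : a w ≠ a t := by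
  intro he
  have := mex_notMem (optionValues_finite a t)
  rw [← ha t] at this
  exact this (mem_optionValues.2 ⟨w, h1, h2, he⟩)

/-- If `a` maps `[s, 2s]` onto `{0, …, s}`, then the next two values are `s + 1` and `a s`. -/
theorem next_values {a : ℕ → ℕ} (ha : ∀ t, a t = mex (optionValues a t)) {s : ℕ}
    (hb : ∀ w, s ≤ w → w ≤ 2 * s → a w ≤ s)
    (hs : ∀ n ≤ s, ∃ w, s ≤ w ∧ w ≤ 2 * s ∧ a w = n) :
    a (2 * s + 1) = s + 1 ∧ a (2 * s + 2) = a s := by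
  have hodd : a (2 * s + 1) = s + 1 := by
    rw [ha]
    apply mex_eq_of
    · intro hm
      obtain ⟨w, h1, h2, h3⟩ := mem_optionValues.1 hm
      have := hb w (by omega) (by omega)
      omega
    · intro n hn
      obtain ⟨w, h1, h2, h3⟩ := hs n (by omega)
      exact mem_optionValues.2 ⟨w, by omega, by omega, h3⟩
  have hle := hb s le_rfl (by omega)
  refine ⟨hodd, ?_⟩
  rw [ha (2 * s + 2)]
  apply mex_eq_of
  · intro hm
    obtain ⟨w, h1, h2, h3⟩ := mem_optionValues.1 hm
    exact ne_of_option ha (w := s) (t := w) (by omega) (by omega) h3.symm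
  · intro n hn
    obtain ⟨w, h1, h2, h3⟩ := hs n (by omega)
    have hne : w ≠ s := by
      rintro rfl
      omega
    exact mem_optionValues.2 ⟨w, by omega, by omega, h3⟩

theorem pass_free_block {a : ℕ → ℕ} (ha : ∀ t, a t = mex (optionValues a t)) (s : ℕ) :
    (∀ w, s ≤ w → w ≤ 2 * s → a w ≤ s) ∧
      (∀ n ≤ s, ∃ w, s ≤ w ∧ w ≤ 2 * s ∧ a w = n) := by
  induction s with
  | zero =>
    have h0 : a 0 = 0 := by
      rw [ha]
      apply mex_eq_of
      · intro hm
        obtain ⟨w, h1, -, -⟩ := mem_optionValues.1 hm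
        omega
      · intro n hn
        omega
    refine ⟨fun w _ h2 => ?_, fun n hn => ⟨0, le_rfl, le_rfl, by omega⟩⟩
    obtain rfl : w = 0 := by omega
    omega
  | succ s ih =>
    obtain ⟨hb, hs⟩ := ih
    obtain ⟨hodd, heven⟩ := next_values ha hb hs
    have hle := hb s le_rfl (by omega)
    constructor
    · intro w h1 h2
      by_cases hw : w ≤ 2 * s
      · have := hb w (by omega) hw
        omega
      · obtain rfl | rfl : w = 2 * s + 1 ∨ w = 2 * s + 2 := by omega
        · omega
        · omega
    · intro n hn
      rcases Nat.lt_or_ge s n with hlt | hge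
      · exact ⟨2 * s + 1, by omega, by omega, by omega⟩
      · obtain ⟨w, h1, h2, h3⟩ := hs n hge
        by_cases hw : w = s
        · subst hw
          exact ⟨2 * w + 2, by omega, by omega, by omega⟩
        · exact ⟨w, by omega, by omega, h3⟩

theorem recurrences {a : ℕ → ℕ} (ha : ∀ t, a t = mex (optionValues a t)) (s : ℕ) :
    a (2 * s + 1) = s + 1 ∧ a (2 * s + 2) = a s :=
  next_values ha (pass_free_block ha s).1 (pass_free_block ha s).2

/-- A pile `t ≥ 2` of value `1` has an option of value `2`: if `t = 2 s + 2` and `w` is such an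
option of `s`, then `2 w + 2` is one of `t`; the descent ends at `t = 4`, which has the
option `3`. -/
theorem exists_option_two {a : ℕ → ℕ} (ha : ∀ t, a t = mex (optionValues a t)) (t : ℕ)
    (ht : 2 ≤ t) (h : a t = 1) : ∃ w, w < t ∧ t ≤ 2 * w + 1 ∧ a w = 2 := by
  induction t using Nat.strong_induction_on with
  | _ t ih =>
    obtain ⟨s, rfl | rfl⟩ : ∃ s, t = 2 * s + 1 ∨ t = 2 * s + 2 := ⟨(t - 1) / 2, by omega⟩
    · have := (recurrences ha s).1
      omega
    · have hs : a s = 1 := by rw [← (recurrences ha s).2, h]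
      by_cases h2 : 2 ≤ s
      · obtain ⟨w, h3, h4, h5⟩ := ih s (by omega) h2 hs
        exact ⟨2 * w + 2, by omega, by omega, by rw [(recurrences ha w).2, h5]⟩
      · have h0 := (pass_free_block ha 0).1 0 le_rfl le_rfl
        have hs0 : s ≠ 0 := by
          rintro rfl
          omega
        obtain rfl : s = 1 := by omega
        exact ⟨3, by omega, by omega, (recurrences ha 1).1⟩

/-- The permutation `0 → 1 → 2 → 0`, `3 ↔ 4`, `5 ↔ 6`, … of the naturals. -/
def passPerm (n : ℕ) : ℕ :=
  if n = 0 then 1 else if n = 1 then 2 else if n = 2 then 0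
  else if n % 2 = 1 then n + 1 else n - 1

theorem passPerm_ne (n : ℕ) : passPerm n ≠ n := by
  unfold passPerm
  split_ifs <;> omega

theorem passPerm_inj {m n : ℕ} (h : passPerm m = passPerm n) : m = n := by
  unfold passPerm at h
  split_ifs at h <;> omega

/-- Every value below `passPerm g` other than `g` comes from a smaller argument than `g`, except
that `0 < passPerm 1` comes from `2`. -/
theorem exists_of_lt_passPerm {g n : ℕ} (h : n < passPerm g) (hne : n ≠ g) :
    ∃ m, passPerm m = n ∧ (m < g ∨ (g = 1 ∧ m = 2)) := by
  have hn : n = 0 ∨ n = 1 ∨ n = 2 ∨ (3 ≤ n ∧ n % 2 = 1) ∨ (4 ≤ n ∧ n % 2 = 0) := by omega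
  unfold passPerm at h
  rcases hn with rfl | rfl | rfl | hn | hn
  · exact ⟨2, rfl, by split_ifs at h <;> omega⟩
  · exact ⟨0, rfl, by split_ifs at h <;> omega⟩
  · exact ⟨1, rfl, by split_ifs at h <;> omega⟩
  · exact ⟨n + 1, by unfold passPerm; split_ifs <;> first | omega | contradiction,
      by split_ifs at h <;> omega⟩
  · exact ⟨n - 1, by unfold passPerm; split_ifs <;> omega, by split_ifs at h <;> omega⟩

/-- With the pass still available, the value of a nonempty pile is `passPerm` of its pass-free
value. -/
theorem grundy_one_eq_perm {a b : ℕ → ℕ} (ha : ∀ t, a t = mex (optionValues a t))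
    (hb0 : b 0 = 0) (hb : ∀ t, 1 ≤ t → b t = mex (optionValues b t ∪ {a t})) (t : ℕ)
    (ht : 1 ≤ t) : b t = passPerm (a t) := by
  induction t using Nat.strong_induction_on with
  | _ t ih =>
    rw [hb t ht]
    by_cases ht1 : t = 1
    · -- The pile `1` is separate because its option `0` violates `b = passPerm ∘ a`.
      subst ht1
      have h1 : a 1 = 1 := (recurrences ha 0).1
      rw [h1]
      apply mex_eq_of
      · rintro (hm | hm)
        · obtain ⟨w, h2, -, h3⟩ := mem_optionValues.1 hm
          obtain rfl : w = 0 := by omega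
          rw [hb0] at h3
          simp [passPerm] at h3
        · exact passPerm_ne 1 hm
      · intro n hn
        have hn2 : n < 2 := by simpa [passPerm] using hn
        obtain rfl | rfl : n = 0 ∨ n = 1 := by omega
        · exact Or.inl (mem_optionValues.2 ⟨0, by omega, by omega, hb0⟩)
        · exact Or.inr rfl
    · apply mex_eq_of
      · rintro (hm | hm)
        · obtain ⟨w, h1, h2, h3⟩ := mem_optionValues.1 hm
          rw [ih w h1 (by omega)] at h3
          exact ne_of_option ha h1 h2 (passPerm_inj h3)
        · exact passPerm_ne _ hm
      · intro n hn
        by_cases hne : n = a t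
        · exact Or.inr hne
        · obtain ⟨m, rfl, hm⟩ := exists_of_lt_passPerm hn hne
          have hw : ∃ w, w < t ∧ t ≤ 2 * w + 1 ∧ a w = m := by
            rcases hm with hm | ⟨hg, rfl⟩
            · rw [ha t] at hm
              exact mem_optionValues.1 (mem_of_lt_mex hm)
            · exact exists_option_two ha t (by omega) hg
          obtain ⟨w, h1, h2, rfl⟩ := hw
          exact Or.inl (mem_optionValues.2 ⟨w, h1, h2, ih w h1 (by omega)⟩)

/-- One-pile maximum Nim with `f(x) = ⌈x/2⌉` and a one-time pass: if `G(u,0) = 2` (with `u ≥ 1`), then `G(u,1) = 0`. -/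
theorem halfNimPass_grundy_two
    (G : ℕ → ℕ → ℕ)
    (hG0 : ∀ t : ℕ, G t 0 = mex {g : ℕ | ∃ v : ℕ, 1 ≤ v ∧ v ≤ (t + 1) / 2 ∧ g = G (t - v) 0})
    (hG10 : G 0 1 = 0)
    (hG1 : ∀ t : ℕ, 1 ≤ t → G t 1 =
        mex ({g : ℕ | ∃ v : ℕ, 1 ≤ v ∧ v ≤ (t + 1) / 2 ∧ g = G (t - v) 1} ∪ {G t 0}))
    (u : ℕ) (hu : 1 ≤ u) (h : G u 0 = 2) :
    G u 1 = 0 := by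
  have key := grundy_one_eq_perm (a := fun t => G t 0) (b := fun t => G t 1) hG0 hG10 hG1 u hu
  simpa [h, passPerm] using key
end
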